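/- Let D be a nonempty closed convex subset of ℝ^d with nonempty interior, let g : ℝ^d → ℝ be continuous and m-strongly convex with m > 0, let σ > 0, and for n ≥ 1 set f_n(x) = g(x) + (n/2)·dist(x,D)², Z^n = ∫_{ℝ^d} exp(−(2/σ²)f_n) dx, and let π^n be the probability measure with Lebesgue density exp(−(2/σ²)f_n)/Z^n. Let π be the truncated Gibbs measure with Lebesgue density exp(−(2/σ²)g(x))·1_D(x)/Z_D, where Z_D = ∫_D exp(−(2/σ²)g) dx > 0. Then for every bounded continuous function φ : ℝ^d → ℝ, ∫ φ dπ^n → ∫ φ dπ as n → ∞; that is, π^n converges weakly to π. -/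

import Mathlib

open MeasureTheory Metric Filter

/-- A continuous strongly convex function on a proper space grows at least quadratically. -/
theorem StrongConvexOn.exists_quadratic_lower_bound {E : Type*} [NormedAddCommGroup E]
    [NormedSpace ℝ E] [ProperSpace E] {g : E → ℝ} {m : ℝ} (hm : 0 < m)
    (hg : StrongConvexOn Set.univ m g) (hgc : Continuous g) :
    ∃ C : ℝ, ∀ x, m / 4 * ‖x‖ ^ 2 - C ≤ g x := by
  obtain ⟨B, hB⟩ := (isCompact_closedBall (0 : E) 1).exists_bound_of_continuousOn
    hgc.continuousOn
  have hB0 : |g 0| ≤ B := by simpa using hB 0 (by simp)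
  have hBnn : 0 ≤ B := (abs_nonneg _).trans hB0
  have hg0 := abs_le.1 hB0
  set K : ℝ := 2 * B + m / 2 with hK
  have hKm : 0 ≤ K ^ 2 / m := by positivity
  refine ⟨K ^ 2 / m + B + m / 4, fun x => ?_⟩
  rcases le_total ‖x‖ 1 with hx | hx
  · have hgx := abs_le.1 (hB x (by simpa using hx))
    have hsq : ‖x‖ ^ 2 ≤ 1 := pow_le_one₀ (norm_nonneg x) hx
    nlinarith [hgx.1]
  · have hr : 0 < ‖x‖ := by linarith
    have hinv : ‖x‖⁻¹ ≤ 1 := inv_le_one_of_one_le₀ hx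
    have hconv := hg.2 (Set.mem_univ x) (Set.mem_univ 0) (inv_nonneg.2 hr.le)
      (sub_nonneg.2 hinv) (by ring)
    have hunit : ‖‖x‖⁻¹ • x‖ ≤ 1 := by
      rw [norm_smul, norm_inv, norm_norm, inv_mul_cancel₀ hr.ne']
    have hgu := (abs_le.1 (hB (‖x‖⁻¹ • x) (by simpa using hunit))).1
    simp only [smul_zero, add_zero, sub_zero, smul_eq_mul] at hconv
    have hscaled := mul_le_mul_of_nonneg_left (hgu.trans hconv) hr.le
    have hexpand : ‖x‖ * (‖x‖⁻¹ * g x + (1 - ‖x‖⁻¹) * g 0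
        - ‖x‖⁻¹ * (1 - ‖x‖⁻¹) * (m / 2 * ‖x‖ ^ 2))
        = g x + (‖x‖ - 1) * g 0 - m / 2 * ‖x‖ ^ 2 + m / 2 * ‖x‖ := by
      field_simp
      ring
    rw [hexpand] at hscaled
    have hlin : (‖x‖ - 1) * g 0 ≤ (‖x‖ - 1) * B :=
      mul_le_mul_of_nonneg_left hg0.2 (by linarith)
    have hyoung : K * ‖x‖ ≤ m / 4 * ‖x‖ ^ 2 + K ^ 2 / m := by
      have h : m / 4 * ‖x‖ ^ 2 + K ^ 2 / m - K * ‖x‖ = (m * ‖x‖ / 2 - K) ^ 2 / m := by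
        field_simp
        ring
      have h' : 0 ≤ (m * ‖x‖ / 2 - K) ^ 2 / m := by positivity
      linarith
    rw [hK] at hyoung
    linarith

/-- The Gibbs weight of a continuous strongly convex potential is integrable. -/
theorem StrongConvexOn.integrable_exp_neg_mul {V : Type*} [NormedAddCommGroup V]
    [InnerProductSpace ℝ V] [FiniteDimensional ℝ V] [MeasurableSpace V] [BorelSpace V]
    {g : V → ℝ} {m c : ℝ} (hm : 0 < m) (hc : 0 < c)
    (hg : StrongConvexOn Set.univ m g) (hgc : Continuous g) :
    Integrable (fun x => Real.exp (-c * g x)) := by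
  obtain ⟨C, hC⟩ := hg.exists_quadratic_lower_bound hm hgc
  have hgauss : Integrable (fun x : V => Real.exp (-(c * (m / 4)) * ‖x‖ ^ 2)) := by
    have h := (GaussianFourier.integrable_cexp_neg_mul_sq_norm_add (V := V)
      (b := ((c * (m / 4) : ℝ) : ℂ)) (by rw [Complex.ofReal_re]; positivity) 0 0).norm
    refine h.congr (Eventually.of_forall fun x => ?_)
    simp only [Complex.norm_exp, zero_mul, add_zero]
    norm_cast
  refine (hgauss.const_mul (Real.exp (c * C))).mono' (by fun_prop)
    (Eventually.of_forall fun x => ?_)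
  rw [Real.norm_eq_abs, Real.abs_exp, ← Real.exp_add, Real.exp_le_exp]
  nlinarith [mul_le_mul_of_nonneg_left (hC x) hc.le]

/-- The penalized Gibbs weights converge to the Gibbs weight truncated to `D`. -/
theorem tendsto_exp_neg_mul_add_infDist_sq {X : Type*} [PseudoMetricSpace X] {D : Set X}
    (hD : D.Nonempty) (hDc : IsClosed D) (g : X → ℝ) {c : ℝ} (hc : 0 < c) (x : X) :
    Tendsto (fun n : ℕ => Real.exp (-c * (g x + (n : ℝ) / 2 * infDist x D ^ 2))) atTop
      (nhds (D.indicator (fun y => Real.exp (-c * g y)) x)) := by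
  by_cases hx : x ∈ D
  · simp [hx, infDist_zero_of_mem hx]
  · have hpos : 0 < infDist x D := (hDc.notMem_iff_infDist_pos hD).1 hx
    rw [Set.indicator_of_notMem hx]
    refine Real.tendsto_exp_atBot.comp ((tendsto_const_nhds.add_atTop ?_
      |>.const_mul_atTop_of_neg (neg_lt_zero.2 hc)))
    exact (tendsto_natCast_atTop_atTop.atTop_div_const two_pos).atTop_mul_const (by positivity)

/-- Integrals of bounded functions against the penalized Gibbs weights converge to the integral
against the truncated Gibbs weight. -/
theorem tendsto_integral_exp_neg_mul_add_infDist_sq {X : Type*} [PseudoMetricSpace X]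
    [SecondCountableTopology X] [MeasurableSpace X] [BorelSpace X] {μ : Measure X} {D : Set X}
    (hD : D.Nonempty) (hDc : IsClosed D) {g : X → ℝ} (hgc : Continuous g) {c : ℝ} (hc : 0 < c)
    (hint : Integrable (fun x => Real.exp (-c * g x)) μ)
    {φ : X → ℝ} (hφ : Continuous φ) {M : ℝ} (hM : ∀ x, |φ x| ≤ M) :
    Tendsto (fun n : ℕ => ∫ x, Real.exp (-c * (g x + (n : ℝ) / 2 * infDist x D ^ 2)) * φ x ∂μ)
      atTop (nhds (∫ x, D.indicator (fun y => Real.exp (-c * g y)) x * φ x ∂μ)) := by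
  have hdist : Continuous fun x => infDist x D := continuous_infDist_pt D
  refine tendsto_integral_of_dominated_convergence (fun x => Real.exp (-c * g x) * M)
    (fun n => Continuous.aestronglyMeasurable (by fun_prop)) (hint.mul_const M)
    (fun n => Eventually.of_forall fun x => ?_) (Eventually.of_forall fun x =>
      (tendsto_exp_neg_mul_add_infDist_sq hD hDc g hc x).mul_const _)
  rw [norm_mul, Real.norm_eq_abs, Real.abs_exp, Real.norm_eq_abs]
  refine mul_le_mul (Real.exp_le_exp.2 ?_) (hM x) (abs_nonneg _) (Real.exp_pos _).le
  have : 0 ≤ c * ((n : ℝ) / 2 * infDist x D ^ 2) := by positivity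
  linarith

/-- Integration against a measure with normalized density `w / z`. -/
theorem integral_withDensity_ofReal_div {X : Type*} [MeasurableSpace X] {μ : Measure X}
    {w : X → ℝ} (hw : Measurable w) (hw0 : ∀ x, 0 ≤ w x) {z : ℝ} (hz : 0 ≤ z) (φ : X → ℝ) :
    ∫ x, φ x ∂(μ.withDensity fun x => ENNReal.ofReal (w x / z)) = (∫ x, w x * φ x ∂μ) / z := by
  rw [integral_withDensity_eq_integral_toReal_smul (by fun_prop) (by simp), ← integral_div]
  refine integral_congr_ae (Eventually.of_forall fun x => ?_)
  simp only [ENNReal.toReal_ofReal (div_nonneg (hw0 x) hz), smul_eq_mul]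
  ring

/-- Weak convergence of the penalized Gibbs measures `π^n` to the truncated
Gibbs measure `π` on `D`: for every bounded continuous `φ : ℝ^d → ℝ`,
`∫ φ dπ^n → ∫ φ dπ`. -/
theorem penalized_gibbs_weak_convergence
    {d : ℕ} (D : Set (EuclideanSpace ℝ (Fin d)))
    (hDne : D.Nonempty) (hDclosed : IsClosed D) (hDconv : Convex ℝ D)
    (hDint : (interior D).Nonempty)
    (g : EuclideanSpace ℝ (Fin d) → ℝ) (hgc : Continuous g)
    (m : ℝ) (hm : 0 < m) (hgsc : StrongConvexOn Set.univ m g)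
    (σ : ℝ) (hσ : 0 < σ)
    (fn : ℕ → EuclideanSpace ℝ (Fin d) → ℝ)
    (hfn : ∀ n x, fn n x = g x + (n : ℝ) / 2 * (infDist x D) ^ 2)
    (Z : ℕ → ℝ)
    (hZ : ∀ n, Z n = ∫ x : EuclideanSpace ℝ (Fin d), Real.exp (-(2 / σ ^ 2) * fn n x))
    (π' : ℕ → Measure (EuclideanSpace ℝ (Fin d)))
    (hπ' : ∀ n, π' n = volume.withDensity
      (fun x => ENNReal.ofReal (Real.exp (-(2 / σ ^ 2) * fn n x) / Z n)))
    (ZD : ℝ) (hZD : ZD = ∫ x in D, Real.exp (-(2 / σ ^ 2) * g x))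
    (π : Measure (EuclideanSpace ℝ (Fin d)))
    (hπ : π = volume.withDensity
      (fun x => ENNReal.ofReal
        (D.indicator (fun y => Real.exp (-(2 / σ ^ 2) * g y)) x / ZD))) :
    ∀ φ : EuclideanSpace ℝ (Fin d) → ℝ, Continuous φ → (∃ M : ℝ, ∀ x, |φ x| ≤ M) →
      Tendsto (fun n : ℕ => ∫ x, φ x ∂(π' n)) atTop (nhds (∫ x, φ x ∂π)) := by
  rintro φ hφ ⟨M, hM⟩
  have hc : 0 < 2 / σ ^ 2 := by positivity
  generalize 2 / σ ^ 2 = c at *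
  obtain rfl : fn = fun (n : ℕ) x => g x + (n : ℝ) / 2 * infDist x D ^ 2 := by
    ext n x
    exact hfn n x
  have hint : Integrable (fun x => Real.exp (-c * g x)) :=
    hgsc.integrable_exp_neg_mul hm hc hgc
  have hdist : Continuous fun x => infDist x D := continuous_infDist_pt D
  have hexp : Continuous fun x => Real.exp (-c * g x) := by fun_prop
  have hZD0 : 0 < ZD := by
    have : NeZero (volume.restrict D) := by
      rw [neZero_iff, Ne, Measure.restrict_eq_zero]
      exact (Measure.measure_pos_of_nonempty_interior volume hDint).ne'
    rw [hZD]
    exact integral_exp_pos hint.integrableOn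
  have hZlim : Tendsto Z atTop (nhds ZD) := by
    have h := tendsto_integral_exp_neg_mul_add_infDist_sq hDne hDclosed hgc hc hint
      (continuous_const (y := (1 : ℝ))) (M := 1) (by simp)
    simp only [mul_one, integral_indicator hDclosed.measurableSet, ← hZD] at h
    exact h.congr fun n => (hZ n).symm
  have hZ0 : ∀ n, 0 ≤ Z n := fun n => by
    rw [hZ]
    exact integral_nonneg fun x => (Real.exp_pos _).le
  have hlim := (tendsto_integral_exp_neg_mul_add_infDist_sq hDne hDclosed hgc hc hint
    hφ hM).div hZlim hZD0.ne'
  rw [hπ, integral_withDensity_ofReal_div (hexp.measurable.indicator hDclosed.measurableSet)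
    (Set.indicator_nonneg fun x _ => (Real.exp_pos _).le) hZD0.le]
  refine hlim.congr fun n => ?_
  rw [hπ', integral_withDensity_ofReal_div (Continuous.measurable (by fun_prop))
    (fun x => (Real.exp_pos _).le) (hZ0 n)]
  rfl
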